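/- arXiv:1312.4716 — 2 statements merged into one kernel-verified Lean document; each statement's English description precedes it below -/
import Mathlib

section
/- Let p be an odd prime, k a positive integer, n = 2k, and let i be an integer with 1 ≤ i ≤ n. Set d = (p^k - 1)·(p^i - 1)/2 + p^i. For every a ∈ F_{p^n} with a^{p^k - 1} = -1, the polynomial a^{-1}x^d is a complete permutation polynomial over F_{p^n}; that is, both x ↦ a^{-1}x^d and x ↦ a^{-1}x^d + x are bijections of F_{p^n}. -/
/-!
Put `q = p ^ k`, let `σ x = x ^ q` be the involution of `F` with fixed field `𝔽_q`, and write
`p ^ i = 2 * s + 1`. Then `d = (q + 1) * s + 1`, so with `N x = x * σ x` and `b = a⁻¹` the map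
`x ↦ b * x ^ d + c * x`, for `c ∈ 𝔽_q`, is `x ↦ x * (u + c)` where `u = b * N x ^ s`. Since
`σ b = -b` we have `σ u = -u`, so the norm of the image is
`N x * (c ^ 2 - u ^ 2) = c ^ 2 * N x - b ^ 2 * N x ^ p ^ i`, an additive function of `N x`.
Its kernel on `𝔽_q` is trivial, because a nonzero `u` with `σ u = -u` is not `± c`. Hence the
image determines `N x`, and then also `x`, as `u + c ≠ 0` for `x ≠ 0`. Complete permutation is
the pair of cases `c = 0` and `c = 1`.
-/

open Function

section Involution

variable {R : Type*} [CommRing R] {σ : R →+* R} {b c : R}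

theorem map_mul_map_self (hσ : Involutive σ) (x : R) : σ (x * σ x) = x * σ x := by
  rw [map_mul, hσ, mul_comm]

theorem map_mul_pow_eq_neg (hb : σ b = -b) {D : R} (hD : σ D = D) (s : ℕ) :
    σ (b * D ^ s) = -(b * D ^ s) := by
  rw [map_mul, map_pow, hb, hD, neg_mul]

theorem mul_add_mul_map_mul_add {u : R} (hu : σ u = -u) (hc : σ c = c) (x : R) :
    x * (u + c) * σ (x * (u + c)) = x * σ x * (c ^ 2 - u ^ 2) := by
  rw [map_mul, map_add, hu, hc]
  ring

theorem sub_mul_sq_sub_sq_eq_sub {p i s : ℕ} [ExpChar R p] (hs : p ^ i = 2 * s + 1) (b c D E : R) :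
    (D - E) * (c ^ 2 - (b * (D - E) ^ s) ^ 2) =
      D * (c ^ 2 - (b * D ^ s) ^ 2) - E * (c ^ 2 - (b * E ^ s) ^ 2) := by
  have expand (z : R) : z * (c ^ 2 - (b * z ^ s) ^ 2) = c ^ 2 * z - b ^ 2 * z ^ p ^ i := by
    rw [hs]
    ring
  rw [expand, expand, expand, sub_pow_expChar_pow]
  ring

variable [IsDomain R]

theorem sq_ne_sq_of_map_eq_neg_of_map_eq (hR : ringChar R ≠ 2) {u : R} (hu : σ u = -u)
    (hu₀ : u ≠ 0) (hc : σ c = c) : c ^ 2 ≠ u ^ 2 := by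
  intro h
  have fixed : σ u = u := by
    obtain rfl | rfl := sq_eq_sq_iff_eq_or_eq_neg.mp h
    · exact hc
    · simpa only [map_neg, neg_inj] using hc
  exact hu₀ ((Ring.eq_self_iff_eq_zero_of_char_ne_two hR).mp (hu.symm.trans fixed))

theorem injOn_mul_sq_sub_sq {p i s : ℕ} [ExpChar R p] (hR : ringChar R ≠ 2)
    (hs : p ^ i = 2 * s + 1) (hb : σ b = -b) (hb₀ : b ≠ 0) (hc : σ c = c) :
    Set.InjOn (fun D => D * (c ^ 2 - (b * D ^ s) ^ 2)) {D | σ D = D} := by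
  intro D hD E hE hDE
  by_contra hne
  have hsub : D - E ≠ 0 := sub_ne_zero.mpr hne
  have fixed : σ (D - E) = D - E := by rw [map_sub, hD, hE]
  have hker : (D - E) * (c ^ 2 - (b * (D - E) ^ s) ^ 2) = 0 := by
    rw [sub_mul_sq_sub_sq_eq_sub hs, sub_eq_zero]
    exact hDE
  exact sq_ne_sq_of_map_eq_neg_of_map_eq hR (map_mul_pow_eq_neg hb fixed s)
    (mul_ne_zero hb₀ (pow_ne_zero s hsub)) hc
    (sub_eq_zero.mp ((mul_eq_zero.mp hker).resolve_left hsub))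

theorem injective_mul_mul_pow_add {p i s : ℕ} [ExpChar R p] (hR : ringChar R ≠ 2)
    (hs : p ^ i = 2 * s + 1) (hσ : Involutive σ) (hb : σ b = -b) (hb₀ : b ≠ 0) (hc : σ c = c) :
    Injective fun x => x * (b * (x * σ x) ^ s + c) := by
  have anti (x : R) : σ (b * (x * σ x) ^ s) = -(b * (x * σ x) ^ s) :=
    map_mul_pow_eq_neg hb (map_mul_map_self hσ x) s
  intro x y (hxy : x * (b * (x * σ x) ^ s + c) = y * (b * (y * σ y) ^ s + c))
  have norm_eq : x * σ x = y * σ y := by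
    refine injOn_mul_sq_sub_sq hR hs hb hb₀ hc (map_mul_map_self hσ x) (map_mul_map_self hσ y) ?_
    change x * σ x * (c ^ 2 - (b * (x * σ x) ^ s) ^ 2) =
      y * σ y * (c ^ 2 - (b * (y * σ y) ^ s) ^ 2)
    rw [← mul_add_mul_map_mul_add (anti x) hc, ← mul_add_mul_map_mul_add (anti y) hc, hxy]
  have eq_zero {z : R} (hz : z * σ z = 0) : z = 0 := by
    simpa only [mul_eq_zero, map_eq_zero_iff σ hσ.injective, or_self] using hz
  rcases eq_or_ne (x * σ x) 0 with hx | hx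
  · rw [eq_zero hx, eq_zero (norm_eq.symm.trans hx)]
  · have factor_ne : b * (x * σ x) ^ s + c ≠ 0 := fun h =>
      sq_ne_sq_of_map_eq_neg_of_map_eq hR (anti x) (mul_ne_zero hb₀ (pow_ne_zero s hx)) hc
        (by rw [eq_neg_of_add_eq_zero_right h, neg_sq])
    rw [← norm_eq] at hxy
    exact mul_right_cancel₀ factor_ne hxy

end Involution

theorem ne_zero_of_pow_eq_neg_one {R : Type*} [Ring R] [Nontrivial R] (hR : ringChar R ≠ 2)
    {a : R} {m : ℕ} (ha : a ^ m = -1) : a ≠ 0 := by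
  rintro rfl
  obtain rfl | hm := eq_or_ne m 0
  · exact Ring.neg_one_ne_one_of_char_ne_two hR (by rw [← ha, pow_zero])
  · exact neg_ne_zero.mpr one_ne_zero (by rw [← ha, zero_pow hm])

theorem sub_one_mul_half_add_eq {q r s : ℕ} (hq : 0 < q) (hr : r = 2 * s + 1) :
    (q - 1) * ((r - 1) / 2) + r = (q + 1) * s + 1 := by
  obtain ⟨m, rfl⟩ := Nat.exists_eq_add_one.mpr hq
  have half : (r - 1) / 2 = s := by omega
  rw [half, hr, Nat.add_sub_cancel]
  ring

theorem involutive_iterateFrobenius {F : Type*} [Field F] [Fintype F] {p k : ℕ} [ExpChar F p]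
    (hF : Fintype.card F = p ^ (2 * k)) : Involutive (iterateFrobenius F p k) := by
  intro x
  rw [iterateFrobenius_def, iterateFrobenius_def, ← pow_mul, ← pow_add, ← two_mul, ← hF,
    FiniteField.pow_card]

theorem stmt_2_general {p k : ℕ} (hp : p.Prime) (hodd : Odd p) (i : ℕ)
    {F : Type*} [Field F] [Fintype F] (hF : Fintype.card F = p ^ (2 * k))
    {a c : F} (ha : a ^ (p ^ k - 1) = -1) (hc : c ^ p ^ k = c) :
    Bijective fun x : F => a⁻¹ * x ^ ((p ^ k - 1) * ((p ^ i - 1) / 2) + p ^ i) + c * x := by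
  have : Fact p.Prime := ⟨hp⟩
  have : CharP F p := charP_of_card_eq_prime_pow hF
  have hchar : ringChar F ≠ 2 := by
    rw [ringChar.eq F p]
    exact hodd.ne_two_of_dvd_nat dvd_rfl
  obtain ⟨s, hs⟩ : Odd (p ^ i) := hodd.pow
  have ha₀ : a ≠ 0 := ne_zero_of_pow_eq_neg_one hchar ha
  have inv_anti : iterateFrobenius F p k a⁻¹ = -a⁻¹ := by
    rw [map_inv₀, iterateFrobenius_def, ← pow_sub_one_mul (pow_ne_zero k hp.ne_zero), ha,
      neg_one_mul, inv_neg]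
  refine Finite.injective_iff_bijective.mp ?_
  convert injective_mul_mul_pow_add hchar hs (involutive_iterateFrobenius hF) inv_anti
    (inv_ne_zero ha₀) hc using 2 with x
  rw [sub_one_mul_half_add_eq (pow_pos hp.pos k) hs, iterateFrobenius_def]
  ring

/-- **Theorem.** Let `p` be an odd prime, `k ≥ 1`, `n = 2k`, `1 ≤ i ≤ n`, and
`d = (p^k - 1)·(p^i - 1)/2 + p^i` (the division is exact since `p` is odd).
Let `F` be the finite field with `p^n` elements. For every `a ∈ F` with
`a^(p^k - 1) = -1`, the monomial `a⁻¹ x^d` is a complete permutation polynomial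
over `F`: both `x ↦ a⁻¹ x^d` and `x ↦ a⁻¹ x^d + x` are bijections of `F`. -/
theorem stmt_2 (p : ℕ) (hp : p.Prime) (hodd : Odd p) (k : ℕ) (hk : 0 < k)
    (n : ℕ) (hn : n = 2 * k) (i : ℕ) (hi1 : 1 ≤ i) (hin : i ≤ n)
    (d : ℕ) (hd : d = (p ^ k - 1) * ((p ^ i - 1) / 2) + p ^ i)
    (F : Type*) [Field F] [Fintype F] (hF : Fintype.card F = p ^ n)
    (a : F) (ha : a ^ (p ^ k - 1) = -1) :
    Function.Bijective (fun x : F => a⁻¹ * x ^ d) ∧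
    Function.Bijective (fun x : F => a⁻¹ * x ^ d + x) := by
  subst hn hd
  exact ⟨by simpa using stmt_2_general hp hodd i hF ha (zero_pow (pow_ne_zero k hp.ne_zero)),
    by simpa using stmt_2_general hp hodd i hF ha (one_pow (p ^ k))⟩
end

section
/- Let k be a positive integer with gcd(5, 3^k - 1) = 1, n = 4k, and d = (3^{4k} - 1)/(3^k - 1) + 1. Let a ∈ F_{3^n}, a ≠ 0, and let λ_1, λ_2, λ_3, λ_4 ∈ F_{3^k} be the elementary symmetric functions of a, a^{3^k}, a^{3^{2k}}, a^{3^{3k}}. Then a^{-1}x^d is a complete permutation polynomial over F_{3^n} if and only if one of the following holds: (i) k = 2, λ_2 = λ_1², λ_3 = -λ_1³, and (λ_4 + λ_1⁴)² = -1; (ii) k = 1, λ_2 = λ_1² + 1, λ_3 = -λ_1³, and λ_4 = -λ_1⁴; (iii) k = 1, λ_2 = λ_1² + 2, λ_3 = -λ_1³, and λ_4 = -λ_1⁴ + 1; (iv) k ≡ 2 (mod 4), λ_2 = λ_1², λ_3 = -λ_1³, and λ_4 = -λ_1⁴; (v) k is odd, λ_3 = -λ_1³, and -(λ_2 - λ_1²)²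 = λ_4 - λ_1λ_3. -/
/-!
Let `K ⊆ F` be the fields with `3 ^ k` and `3 ^ (4 * k)` elements and `N` the norm. As `d - 1` is
the norm exponent, `a⁻¹ * x ^ d + x = x * a⁻¹ * (a + N x)`; taking norms, this permutes `F` if and
only if `y * N (a + y)` permutes `K`. That is a quintic over `K`, and translating by `λ₁` turns it
into `X⁵ + bX³ + cX² + eX` with `b = λ₂ - λ₁²`, `c = λ₃ + λ₁³`, `e = λ₄ - λ₁λ₃`.

If such a quintic `f` permutes `K`, Hermite's criterion annihilates coefficients of its powers.
Taking exponents `t + 3 ^ j * m` with `5 * 3 ^ j * m` just below `#K` reduces this to single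
coefficients of `f ^ t` for a few fixed `t`, and these force `b = c = e = 0` (`k` even) or
`c = 0` and `e = -b²` (`k` odd), except when `#K ∈ {3, 9}`. In the odd case `f x - f y` is `x - y`
times a sum of two squares, which vanishes only trivially because `-1` is not a square.

Over `F₃` the quintic with `(b, c, e) = (0, 0, 1)` is also a permutation, but it does not come from
any `a ≠ 0`.
-/

open Polynomial

section HermiteCriterion

variable {K : Type*} [Field K] [Fintype K]

theorem sum_pow_eq_ite (i : ℕ) :
    ∑ x : K, x ^ i = if i ≠ 0 ∧ Fintype.card K - 1 ∣ i then -1 else 0 := by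
  classical
  rcases eq_or_ne i 0 with rfl | hi
  · simp
  · have sum_units : ∑ x : K, x ^ i = ∑ x : Kˣ, (x : K) ^ i := by
      rw [Fintype.sum_eq_add_sum_subtype_ne _ 0, zero_pow hi, zero_add]
      exact (Fintype.sum_equiv unitsEquivNeZero _ _ fun _ => rfl).symm
    simp [sum_units, FiniteField.sum_pow_units K i, hi]

theorem sum_eval_eq_neg_sum_coeff (P : K[X]) {M : ℕ}
    (hP : P.natDegree < (M + 1) * (Fintype.card K - 1)) :
    ∑ x : K, P.eval x = -∑ j ∈ Finset.range M, P.coeff ((j + 1) * (Fintype.card K - 1)) := by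
  set d := Fintype.card K - 1
  have hd : 0 < d := Nat.sub_pos_of_lt Fintype.one_lt_card
  calc ∑ x : K, P.eval x
      = ∑ i ∈ Finset.range ((M + 1) * d), if i ≠ 0 ∧ d ∣ i then -P.coeff i else 0 := by
        simp only [eval_eq_sum_range' hP]
        rw [Finset.sum_comm]
        simp only [← Finset.mul_sum, sum_pow_eq_ite, mul_ite, mul_neg, mul_one, mul_zero, d]
    _ = ∑ j ∈ Finset.range M, -P.coeff ((j + 1) * d) := by
        rw [← Finset.sum_filter]
        refine (Finset.sum_nbij (fun j => (j + 1) * d) ?_ ?_ ?_ fun _ _ => rfl).symm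
        · intro j hj
          simpa [hd, hd.ne'] using hj
        · intro i _ j _ hij
          simpa [hd.ne'] using hij
        · rintro _ hi
          obtain ⟨hlt, h0, j, rfl⟩ := by simpa using hi
          obtain ⟨j, rfl⟩ := Nat.exists_eq_succ_of_ne_zero (right_ne_zero_of_mul h0)
          rw [mul_comm d, mul_lt_mul_iff_left₀ hd] at hlt
          exact ⟨j, by simpa using hlt, mul_comm _ _⟩
    _ = _ := Finset.sum_neg_distrib _

end HermiteCriterion

/-- `f` is a permutation polynomial of the coefficient ring: evaluation of `f` is a bijection. -/
def IsPermPoly {K : Type*} [Semiring K] (f : K[X]) : Prop :=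
  Function.Bijective fun x => f.eval x

theorem IsPermPoly.sum_coeff_pow_eq_zero {K : Type*} [Field K] [Fintype K] {f : K[X]}
    (hf : IsPermPoly f) {s M : ℕ} (hs : s < Fintype.card K - 1)
    (hdeg : s * f.natDegree < (M + 1) * (Fintype.card K - 1)) :
    ∑ j ∈ Finset.range M, (f ^ s).coeff ((j + 1) * (Fintype.card K - 1)) = 0 := by
  rw [← neg_eq_zero, ← sum_eval_eq_neg_sum_coeff _ (natDegree_pow_le.trans_lt hdeg)]
  simp only [eval_pow]
  rw [Function.Bijective.sum_comp hf (fun y => y ^ s)]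
  exact FiniteField.sum_pow_lt_card_sub_one K s hs

section LeadingTerm

variable {R : Type*} [CommRing R] {f : R[X]} {n δ : ℕ}

theorem degree_le_of_degree_sub_X_pow_add_le
    (hf : (f - X ^ n).degree + (δ : WithBot ℕ) ≤ (n : WithBot ℕ)) : f.degree ≤ n := by
  have hsub : (f - X ^ n).degree ≤ (n : WithBot ℕ) :=
    (le_add_of_nonneg_right (by positivity)).trans hf
  simpa using degree_add_le_of_degree_le hsub (degree_X_pow_le n)

theorem degree_pow_sub_X_pow_add_le
    (hf : (f - X ^ n).degree + (δ : WithBot ℕ) ≤ (n : WithBot ℕ)) (m : ℕ) :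
    (f ^ m - X ^ (n * m)).degree + (δ : WithBot ℕ) ≤ ((n * m : ℕ) : WithBot ℕ) := by
  induction m with
  | zero => simp
  | succ m ih =>
    have hsplit : f ^ (m + 1) - X ^ (n * (m + 1)) =
        (f ^ m - X ^ (n * m)) * f + X ^ (n * m) * (f - X ^ n) := by ring
    have hleft : ((f ^ m - X ^ (n * m)) * f).degree + (δ : WithBot ℕ) ≤ (n * m : ℕ) + n := by
      grw [degree_mul_le, add_right_comm, ih, degree_le_of_degree_sub_X_pow_add_le hf]
    have hright : (X ^ (n * m) * (f - X ^ n)).degree + (δ : WithBot ℕ) ≤ (n * m : ℕ) + n := by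
      grw [degree_mul_le, degree_X_pow_le, add_assoc, hf]
    grw [hsplit, degree_add_le, max_add, hleft, hright, max_self]
    norm_cast

variable (p : ℕ) [Fact p.Prime] [CharP R p]

theorem degree_pow_char_pow_mul_sub_X_pow_add_le
    (hf : (f - X ^ n).degree + (δ : WithBot ℕ) ≤ (n : WithBot ℕ)) (j m : ℕ) :
    (f ^ (p ^ j * m) - X ^ (n * (p ^ j * m))).degree + ((δ * p ^ j : ℕ) : WithBot ℕ) ≤
      ((n * (p ^ j * m) : ℕ) : WithBot ℕ) := by
  have hfrob : f ^ (p ^ j * m) - X ^ (n * (p ^ j * m)) = (f ^ m - X ^ (n * m)) ^ p ^ j := by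
    rw [sub_pow_char_pow, ← pow_mul, ← pow_mul, mul_comm m, mul_assoc n, mul_comm m]
  calc _ ≤ p ^ j • ((f ^ m - X ^ (n * m)).degree + (δ : WithBot ℕ)) := by
        grw [hfrob, degree_pow_le, nsmul_add]
        simp [mul_comm]
    _ ≤ p ^ j • ((n * m : ℕ) : WithBot ℕ) := by
        grw [degree_pow_sub_X_pow_add_le hf m]
    _ = _ := by
        rw [nsmul_eq_mul]
        norm_cast
        rw [mul_left_comm]

/-- In characteristic `p`, the gap `δ` below the leading term of `f` becomes a gap `δ * p ^ j` below
that of `f ^ (p ^ j * m)`, so the top coefficients of `f ^ (t + p ^ j * m)` are those of `f ^ t`. -/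
theorem coeff_pow_add_char_pow_mul
    (hf : (f - X ^ n).degree + (δ : WithBot ℕ) ≤ (n : WithBot ℕ)) {j m t N : ℕ}
    (ht : n * t < N + δ * p ^ j) :
    (f ^ (t + p ^ j * m)).coeff (N + n * (p ^ j * m)) = (f ^ t).coeff N := by
  have hsplit : f ^ (t + p ^ j * m) = f ^ t * X ^ (n * (p ^ j * m)) +
      f ^ t * (f ^ (p ^ j * m) - X ^ (n * (p ^ j * m))) := by ring
  have hdeg : (f ^ t * (f ^ (p ^ j * m) - X ^ (n * (p ^ j * m)))).degree <
      ((N + n * (p ^ j * m) : ℕ) : WithBot ℕ) := by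
    refine lt_of_add_lt_add_right (a := ((δ * p ^ j : ℕ) : WithBot ℕ)) ?_
    grw [degree_mul_le, degree_pow_le, degree_le_of_degree_sub_X_pow_add_le hf, add_assoc,
      degree_pow_char_pow_mul_sub_X_pow_add_le p hf]
    rw [nsmul_eq_mul]
    norm_cast
    linarith
  rw [hsplit, coeff_add, coeff_mul_X_pow, coeff_eq_zero_of_degree_lt hdeg, add_zero]

/-- Hermite's criterion for `f ^ (t + p ^ j * m)`, whose degree is less than `2 * (#K - 1)`: it
concerns the single coefficient in degree `#K - 1`, which is read off from `f ^ t`. -/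
theorem IsPermPoly.coeff_pow_eq_zero {K : Type*} [Field K] [Fintype K] [CharP K p] {f : K[X]}
    (hperm : IsPermPoly f)
    (hf : (f - X ^ n).degree + (δ : WithBot ℕ) ≤ (n : WithBot ℕ)) {j m t N : ℕ}
    (hK : Fintype.card K = N + n * (p ^ j * m) + 1) (htN : t < N) (hn : 1 ≤ n)
    (ht : n * t < N + δ * p ^ j) (ht' : n * t < 2 * N + n * (p ^ j * m)) :
    (f ^ t).coeff N = 0 := by
  have hs : t + p ^ j * m < Fintype.card K - 1 := by
    grw [hK, Nat.add_sub_cancel, ← hn]; omega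
  have hdeg : f.natDegree ≤ n :=
    natDegree_le_of_degree_le (degree_le_of_degree_sub_X_pow_add_le hf)
  have := hperm.sum_coeff_pow_eq_zero (M := 1) hs (by
    grw [hdeg]; rw [hK, Nat.add_sub_cancel]; linarith)
  rwa [Finset.sum_range_one, zero_add, one_mul, hK, Nat.add_sub_cancel,
    coeff_pow_add_char_pow_mul p hf ht] at this

end LeadingTerm

theorem coeff_pow_char {R : Type*} [CommRing R] (p : ℕ) [Fact p.Prime] [CharP R p] (P : R[X])
    (m : ℕ) : (P ^ p).coeff m = if p ∣ m then P.coeff (m / p) ^ p else 0 := by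
  rw [← map_frobenius_expand, coeff_map, coeff_expand (Fact.out : p.Prime).pos,
    apply_ite (frobenius R p), frobenius_def, map_zero]

/-- The monic quintic `X⁵ + bX³ + cX² + eX` without quartic and constant term, the normal form under
translation (`5` being invertible) of `y ↦ y * N(a + y)`, where `N` is a norm from a quartic
extension. -/
noncomputable def depressedQuintic {R : Type*} [CommRing R] (b c e : R) : R[X] :=
  X ^ 5 + C b * X ^ 3 + C c * X ^ 2 + C e * X

namespace depressedQuintic

variable {R : Type*} [CommRing R] (b c e : R)

theorem eval_eq (x : R) :
    (depressedQuintic b c e).eval x = x ^ 5 + b * x ^ 3 + c * x ^ 2 + e * x := by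
  simp [depressedQuintic]

theorem sq_eq : depressedQuintic b c e ^ 2 = X ^ 10 + C (2 * b) * X ^ 8 + C (2 * c) * X ^ 7 +
    C (2 * e + b ^ 2) * X ^ 6 + C (2 * b * c) * X ^ 5 + C (c ^ 2 + 2 * b * e) * X ^ 4 +
    C (2 * c * e) * X ^ 3 + C (e ^ 2) * X ^ 2 := by
  simp only [depressedQuintic, map_add, map_mul, map_pow, map_ofNat]
  ring

theorem degree_sub_X_pow_add_le :
    (depressedQuintic b c e - X ^ 5).degree + ((2 : ℕ) : WithBot ℕ) ≤ ((5 : ℕ) : WithBot ℕ) := by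
  have : (depressedQuintic b c e - X ^ 5).degree ≤ 3 := by
    rw [depressedQuintic, add_assoc, add_assoc, add_sub_cancel_left]
    compute_degree
  grw [this]
  norm_num

theorem natDegree_le : (depressedQuintic b c e).natDegree ≤ 5 :=
  natDegree_le_of_degree_le (degree_le_of_degree_sub_X_pow_add_le (degree_sub_X_pow_add_le b c e))

theorem coeff_eq (n : ℕ) : (depressedQuintic b c e).coeff n =
  if n = 5 then 1 else if n = 3 then b else if n = 2 then c else if n = 1 then e else 0 := by
  simp only [depressedQuintic, coeff_add, coeff_X_pow, coeff_C_mul, coeff_X]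
  grind

theorem coeff_sq_eq (n : ℕ) : (depressedQuintic b c e ^ 2).coeff n =
    if n = 10 then 1 else if n = 8 then 2 * b else if n = 7 then 2 * c else
    if n = 6 then 2 * e + b ^ 2 else if n = 5 then 2 * b * c else
    if n = 4 then c ^ 2 + 2 * b * e else if n = 3 then 2 * c * e else
    if n = 2 then e ^ 2 else 0 := by
  simp only [sq_eq, coeff_add, coeff_X_pow, coeff_C_mul]
  grind

theorem coeff_pow_five_twentyFour : (depressedQuintic b c e ^ 5).coeff 24 = 0 := by
  have hdeg : (depressedQuintic b c e ^ 5 - X ^ 25).degree < ((24 : ℕ) : WithBot ℕ) := by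
    refine lt_of_add_lt_add_right (a := ((2 : ℕ) : WithBot ℕ)) ?_
    grw [degree_pow_sub_X_pow_add_le (degree_sub_X_pow_add_le b c e) 5]
    norm_num
  simpa [coeff_X_pow] using coeff_eq_zero_of_degree_lt hdeg

section CharThree

variable [CharP R 3] (t n : ℕ)

theorem coeff_pow_three_mul_add_one_add_five :
    (depressedQuintic b c e ^ (3 * t + 1)).coeff (3 * n + 5) =
      (depressedQuintic b c e ^ t).coeff n ^ 3 +
      c * (depressedQuintic b c e ^ t).coeff (n + 1) ^ 3 := by
  rw [pow_succ, mul_comm 3, pow_mul]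
  generalize depressedQuintic b c e ^ t = P
  simp only [depressedQuintic, mul_add, mul_left_comm (P ^ 3), coeff_add, coeff_mul_X_pow',
    coeff_mul_X, coeff_C_mul, coeff_pow_char 3]
  grind

theorem coeff_pow_three_mul_add_one_add_one :
    (depressedQuintic b c e ^ (3 * t + 1)).coeff (3 * n + 1) =
      e * (depressedQuintic b c e ^ t).coeff n ^ 3 := by
  rw [pow_succ, mul_comm 3, pow_mul]
  generalize depressedQuintic b c e ^ t = P
  simp only [depressedQuintic, mul_add, mul_left_comm (P ^ 3), coeff_add, coeff_mul_X_pow',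
    coeff_mul_X, coeff_C_mul, coeff_pow_char 3]
  grind

theorem coeff_pow_three_mul_add_two_add_eight :
    (depressedQuintic b c e ^ (3 * t + 2)).coeff (3 * n + 8) =
      2 * b * (depressedQuintic b c e ^ t).coeff n ^ 3 +
      2 * b * c * (depressedQuintic b c e ^ t).coeff (n + 1) ^ 3 +
      e ^ 2 * (depressedQuintic b c e ^ t).coeff (n + 2) ^ 3 := by
  rw [pow_add, mul_comm 3, pow_mul, sq_eq]
  generalize depressedQuintic b c e ^ t = P
  simp only [mul_add, mul_left_comm (P ^ 3), coeff_add, coeff_mul_X_pow', coeff_C_mul,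
    coeff_pow_char 3]
  grind

theorem coeff_pow_three_mul_add_two_add_ten :
    (depressedQuintic b c e ^ (3 * t + 2)).coeff (3 * n + 10) =
      (depressedQuintic b c e ^ t).coeff n ^ 3 +
      2 * c * (depressedQuintic b c e ^ t).coeff (n + 1) ^ 3 +
      (c ^ 2 + 2 * b * e) * (depressedQuintic b c e ^ t).coeff (n + 2) ^ 3 := by
  rw [pow_add, mul_comm 3, pow_mul, sq_eq]
  generalize depressedQuintic b c e ^ t = P
  simp only [mul_add, mul_left_comm (P ^ 3), coeff_add, coeff_mul_X_pow', coeff_C_mul,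
    coeff_pow_char 3]
  grind

theorem coeff_pow_four_seven : (depressedQuintic b c e ^ 4).coeff 7 = e * c ^ 3 :=
  (coeff_pow_three_mul_add_one_add_one b c e 1 2).trans <| by simp [coeff_eq]

theorem coeff_pow_four_eight : (depressedQuintic b c e ^ 4).coeff 8 = e ^ 3 + c ^ 4 :=
  (coeff_pow_three_mul_add_one_add_five b c e 1 1).trans <| by simp only [pow_one, coeff_eq]; grind

theorem coeff_pow_four_fourteen : (depressedQuintic b c e ^ 4).coeff 14 = b ^ 3 :=
  (coeff_pow_three_mul_add_one_add_five b c e 1 3).trans <| by simp [coeff_eq]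

theorem coeff_pow_four_sixteen : (depressedQuintic b c e ^ 4).coeff 16 = e :=
  (coeff_pow_three_mul_add_one_add_one b c e 1 5).trans <| by simp [coeff_eq]

theorem coeff_pow_four_seventeen : (depressedQuintic b c e ^ 4).coeff 17 = c :=
  (coeff_pow_three_mul_add_one_add_five b c e 1 4).trans <| by simp [coeff_eq]

theorem coeff_pow_five_eight :
    (depressedQuintic b c e ^ 5).coeff 8 = 2 * b * c * e ^ 3 + e ^ 2 * c ^ 3 :=
  (coeff_pow_three_mul_add_two_add_eight b c e 1 0).trans <| by simp [coeff_eq]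

theorem coeff_pow_five_sixteen :
    (depressedQuintic b c e ^ 5).coeff 16 = c ^ 3 + 2 * c * b ^ 3 :=
  (coeff_pow_three_mul_add_two_add_ten b c e 1 2).trans <| by simp [coeff_eq]

theorem coeff_pow_five_seventeen : (depressedQuintic b c e ^ 5).coeff 17 = e ^ 2 - b ^ 4 :=
  (coeff_pow_three_mul_add_two_add_eight b c e 1 3).trans <| by simp only [pow_one, coeff_eq]; grind

theorem coeff_pow_seven_twentySix :
    (depressedQuintic b c e ^ 7).coeff 26 = -(c * (c ^ 2 + b ^ 3)) :=
  (coeff_pow_three_mul_add_one_add_five b c e 2 7).trans <| by simp only [coeff_sq_eq]; grind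

theorem coeff_pow_eight_twentySix : (depressedQuintic b c e ^ 8).coeff 26 =
    -(b * (b ^ 6 - e ^ 3 - c ^ 4 + b ^ 2 * e ^ 2)) :=
  (coeff_pow_three_mul_add_two_add_eight b c e 2 6).trans <| by simp only [coeff_sq_eq]; grind

theorem coeff_pow_eight_thirtyFour : (depressedQuintic b c e ^ 8).coeff 34 =
    c ^ 2 - b * (e + b ^ 2) :=
  (coeff_pow_three_mul_add_two_add_ten b c e 2 8).trans <| by simp only [coeff_sq_eq]; grind

theorem coeff_pow_thirteen_twentySix :
    (depressedQuintic b c e ^ 13).coeff 26 = (e * c ^ 3) ^ 3 + c * (e ^ 3 + c ^ 4) ^ 3 :=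
  (coeff_pow_three_mul_add_one_add_five b c e 4 7).trans <| by
    simp [coeff_pow_four_seven, coeff_pow_four_eight]

theorem coeff_pow_thirteen_fiftyTwo : (depressedQuintic b c e ^ 13).coeff 52 = e * c ^ 3 :=
  (coeff_pow_three_mul_add_one_add_one b c e 4 17).trans <| by
    simp [coeff_pow_four_seventeen]

theorem coeff_pow_fourteen_twentySix :
    (depressedQuintic 0 0 e ^ 14).coeff 26 = e ^ 11 :=
  (coeff_pow_three_mul_add_two_add_eight 0 0 e 4 6).trans <| by
    simp only [Nat.reduceAdd, coeff_pow_four_eight]; grind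

theorem coeff_pow_fourteen_fiftyTwo :
    (depressedQuintic 0 0 e ^ 14).coeff 52 = 0 :=
  (coeff_pow_three_mul_add_two_add_ten 0 0 e 4 14).trans <| by
    simp [coeff_pow_four_fourteen]

theorem coeff_pow_twentyFive_oneHundredSeven :
    (depressedQuintic b 0 e ^ 25).coeff 107 = -(b * (e + b ^ 2)) ^ 3 :=
  (coeff_pow_three_mul_add_one_add_five b 0 e 8 34).trans <| by
    simp only [coeff_pow_eight_thirtyFour]; grind

end CharThree

end depressedQuintic

section NegOneNotSquare

theorem not_isSquare_neg_one_of_card_eq_three_pow {K : Type*} [Field K] [Fintype K] {k : ℕ}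
    (hK : Fintype.card K = 3 ^ k) (hk : k % 2 = 1) : ¬IsSquare (-1 : K) := by
  rw [FiniteField.isSquare_neg_one_iff, hK, not_not, ← Nat.div_add_mod k 2, hk, pow_succ, pow_mul,
    Nat.mul_mod, Nat.pow_mod]
  norm_num

theorem eq_zero_of_sq_add_sq_eq_zero {K : Type*} [Field K] (hK : ¬IsSquare (-1 : K)) {x y : K}
    (h : x ^ 2 + y ^ 2 = 0) : y = 0 := by
  by_contra hy
  exact hK ⟨x / y, by field_simp; linear_combination -h⟩

end NegOneNotSquare

namespace IsPermPoly

variable {K : Type*} [Field K] [Fintype K] [CharP K 3] {b c e : K} {m : ℕ}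

open depressedQuintic

theorem coeff_depressedQuintic_pow_eq_zero (hf : IsPermPoly (depressedQuintic b c e))
    (j : ℕ) {t N : ℕ} (hK : Fintype.card K = N + 5 * (3 ^ j * m) + 1) (htN : t < N)
    (ht : 5 * t < N + 2 * 3 ^ j) (ht' : 5 * t < 2 * N + 5 * (3 ^ j * m)) :
    (depressedQuintic b c e ^ t).coeff N = 0 :=
  hf.coeff_pow_eq_zero 3 (degree_sub_X_pow_add_le b c e) hK htN (by norm_num) ht ht'

-- Since `3 ^ (4 * i) % 5 = 1`, the cardinalities `135 * m + 108`, `45 * m + 9` and `135 * m + 27`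
-- below are those of `3 ^ (4 * i + r)` for `r = 5`, `2` and `3`: they are what writes `#K - 1` as
-- `N + 5 * (3 ^ j * m')` with a small `N`.
theorem eq_zero_and_eq_neg_sq_of_card_eq_135_mul_add_108 (hK : Fintype.card K = 135 * m + 108)
    (hf : IsPermPoly (depressedQuintic b c e)) : c = 0 ∧ e = -b ^ 2 := by
  have hK' : Fintype.card K = 17 + 5 * (3 ^ 2 * (3 * m + 2)) + 1 := by omega
  have hc : c = 0 := by
    simpa only [coeff_pow_four_seventeen] using
      hf.coeff_depressedQuintic_pow_eq_zero (t := 4) 2 hK' (by omega) (by omega) (by omega)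
  subst hc
  have h5 : e ^ 2 - b ^ 4 = 0 := by
    simpa only [coeff_pow_five_seventeen] using
      hf.coeff_depressedQuintic_pow_eq_zero (t := 5) 2 hK' (by omega) (by omega) (by omega)
  have h25 : b * (e + b ^ 2) = 0 := by
    simpa [coeff_pow_twentyFive_oneHundredSeven] using
      hf.coeff_depressedQuintic_pow_eq_zero (t := 25) (N := 107) (m := m) 3 (by omega) (by omega)
        (by omega) (by omega)
  grind

theorem eq_zero_of_card_eq_45_mul_add_9 (hK : Fintype.card K = 45 * m + 9) (hm : 0 < m)
    (hf : IsPermPoly (depressedQuintic b c e)) : b = 0 ∧ c = 0 ∧ e = 0 := by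
  have hcoeff (t : ℕ) (ht : t < 6) : (depressedQuintic b c e ^ t).coeff 8 = 0 :=
    hf.coeff_depressedQuintic_pow_eq_zero (m := m) 2 (by omega) (by omega) (by omega) (by omega)
  have h2 := hcoeff 2 (by omega)
  have h4 := hcoeff 4 (by omega)
  have h5 := hcoeff 5 (by omega)
  simp only [coeff_sq_eq] at h2
  rw [coeff_pow_four_eight] at h4
  rw [coeff_pow_five_eight] at h5
  grind

theorem eq_zero_and_sq_eq_neg_one_of_card_eq_nine (hK : Fintype.card K = 9)
    (hf : IsPermPoly (depressedQuintic b c e)) :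
    b = 0 ∧ c = 0 ∧ (e = 0 ∨ e ^ 2 = -1) := by
  have hcoeff (t M : ℕ) (ht : t < 8) (hM : t * 5 < (M + 1) * 8) :
      ∑ j ∈ Finset.range M, (depressedQuintic b c e ^ t).coeff ((j + 1) * 8) = 0 := by
    have := hf.sum_coeff_pow_eq_zero (s := t) (M := M) (by omega)
      (by grw [natDegree_le b c e, hK]; omega)
    simpa only [hK] using this
  have h2 : 2 * b = 0 := by simpa [coeff_sq_eq] using hcoeff 2 1 (by omega) (by omega)
  have h4 : e ^ 3 + c ^ 4 + e = 0 := by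
    simpa [Finset.sum_range_succ, coeff_pow_four_eight, coeff_pow_four_sixteen] using
      hcoeff 4 2 (by omega) (by omega)
  have h5 : 2 * b * c * e ^ 3 + e ^ 2 * c ^ 3 + (c ^ 3 + 2 * c * b ^ 3) = 0 := by
    simpa [Finset.sum_range_succ, coeff_pow_five_eight, coeff_pow_five_sixteen,
      coeff_pow_five_twentyFour] using hcoeff 5 3 (by omega) (by omega)
  grind

section CardEqMulAddTwentySeven

variable (hK : Fintype.card K = 135 * m + 27) (hf : IsPermPoly (depressedQuintic b c e))
include hK hf

theorem coeff_pow_twentySix_eq_zero {t : ℕ} (ht : t < 16)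
    (h52 : (depressedQuintic b c e ^ t).coeff 52 = 0) :
    (depressedQuintic b c e ^ t).coeff 26 = 0 := by
  rcases Nat.eq_zero_or_pos m with rfl | hm
  · have := hf.sum_coeff_pow_eq_zero (s := t) (M := 2) (by omega)
      (by grw [natDegree_le b c e]; omega)
    simpa [hK, Finset.sum_range_succ, h52] using this
  · exact hf.coeff_depressedQuintic_pow_eq_zero (m := m) 3 (by omega) (by omega) (by omega)
      (by omega)

theorem mul_sq_add_pow_three_eq_zero : c * (c ^ 2 + b ^ 3) = 0 := by
  simpa only [coeff_pow_seven_twentySix, neg_eq_zero] using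
    hf.coeff_depressedQuintic_pow_eq_zero (t := 7) (N := 26) (m := m) 3 (by omega) (by omega)
      (by omega) (by omega)

theorem mul_pow_six_sub_eq_zero : b * (b ^ 6 - e ^ 3 - c ^ 4 + b ^ 2 * e ^ 2) = 0 := by
  simpa only [coeff_pow_eight_twentySix, neg_eq_zero] using
    hf.coeff_depressedQuintic_pow_eq_zero (t := 8) (N := 26) (m := m) 3 (by omega) (by omega)
      (by omega) (by omega)

theorem eq_zero_of_card_eq_135_mul_add_27 : c = 0 := by
  have h7 := mul_sq_add_pow_three_eq_zero hK hf
  have h8 := mul_pow_six_sub_eq_zero hK hf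
  by_contra hc
  have hcb : c ^ 2 = -b ^ 3 := by grind
  have hb : b ≠ 0 := by grind
  obtain rfl | rfl : e = 0 ∨ e = b ^ 2 := by grind
  · have h13 := coeff_pow_twentySix_eq_zero hK hf (t := 13) (by omega)
      (by simp [coeff_pow_thirteen_fiftyTwo])
    rw [coeff_pow_thirteen_twentySix] at h13
    grind
  · have hroot : (depressedQuintic b c (b ^ 2)).eval (c / b) =
        (depressedQuintic b c (b ^ 2)).eval 0 := by
      simp only [eval_eq]
      grind
    exact div_ne_zero hc hb (hf.injective hroot)

theorem eq_neg_sq_of_card_eq_135_mul_add_27 (hneg : ¬IsSquare (-1 : K)) : e = -b ^ 2 := by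
  obtain rfl := eq_zero_of_card_eq_135_mul_add_27 hK hf
  have h8 := mul_pow_six_sub_eq_zero hK hf
  rcases eq_or_ne b 0 with rfl | hb
  · have h14 := coeff_pow_twentySix_eq_zero hK hf (t := 14) (by omega)
      (coeff_pow_fourteen_fiftyTwo e)
    simpa [coeff_pow_fourteen_twentySix] using h14
  · have hfactor : (e + b ^ 2) * ((e - b ^ 2) ^ 2 + (b ^ 2) ^ 2) = 0 := by grind
    have hsum : (e - b ^ 2) ^ 2 + (b ^ 2) ^ 2 ≠ 0 := fun h =>
      hb (by simpa using eq_zero_of_sq_add_sq_eq_zero hneg h)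
    exact eq_neg_of_add_eq_zero_left ((mul_eq_zero.mp hfactor).resolve_right hsum)

end CardEqMulAddTwentySeven

end IsPermPoly

theorem pow_injective_of_coprime_card_sub_one {K : Type*} [Field K] [Finite K] {n : ℕ}
    (hn : n ≠ 0) (hcop : Nat.Coprime n (Nat.card K - 1)) :
    Function.Injective (fun x : K => x ^ n) := by
  have := Fintype.ofFinite K
  rw [Nat.card_eq_fintype_card] at hcop
  intro x y (hxy : x ^ n = y ^ n)
  rcases eq_or_ne y 0 with rfl | hy
  · simpa [hn] using hxy
  have hx : x ≠ 0 := by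
    rintro rfl
    exact hy (by simpa [hn] using hxy.symm)
  have hdiv : x / y = 1 := (pow_eq_one_iff_of_coprime hcop).mp
    ⟨by rw [div_pow, hxy, div_self (pow_ne_zero n hy)],
      FiniteField.pow_card_sub_one_eq_one _ (div_ne_zero hx hy)⟩
  exact (div_eq_one_iff_eq hy).mp hdiv

theorem three_pow_four_mul_mod_five (i : ℕ) : 3 ^ (4 * i) % 5 = 1 := by
  rw [pow_mul, Nat.pow_mod]
  simp

theorem mod_four_ne_zero_of_coprime {k : ℕ} (h : Nat.gcd 5 (3 ^ k - 1) = 1) : k % 4 ≠ 0 := by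
  intro hk
  obtain ⟨i, rfl⟩ := Nat.dvd_of_mod_eq_zero hk
  have hdvd : 5 ∣ 3 ^ (4 * i) - 1 :=
    (Nat.modEq_iff_dvd' (Nat.one_le_pow _ _ (by norm_num))).mp (three_pow_four_mul_mod_five i).symm
  simp [Nat.gcd_eq_left hdvd] at h

section Classification

variable {K : Type*} [Field K] {b c e : K}

open depressedQuintic

theorem isPermPoly_depressedQuintic_zero [Finite K] (hcop : Nat.Coprime 5 (Nat.card K - 1)) :
    IsPermPoly (depressedQuintic (0 : K) 0 0) := by
  refine Finite.injective_iff_bijective.mp ?_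
  simpa [eval_eq] using pow_injective_of_coprime_card_sub_one (by norm_num) hcop

theorem isPermPoly_depressedQuintic_iff_of_card_eq_three [Fintype K] (hK : Fintype.card K = 3) :
    IsPermPoly (depressedQuintic b c e) ↔ c = 0 ∧ 1 + b + e ≠ 0 := by
  have hcube (x : K) : x ^ 3 = x := hK ▸ FiniteField.pow_card x
  have hlinear (x : K) : (depressedQuintic b 0 e).eval x = (1 + b + e) * x := by
    rw [eval_eq]
    linear_combination (x ^ 2 + 1 + b) * hcube x
  refine ⟨fun hf => ?_, ?_⟩
  · obtain rfl : c = 0 := by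
      have := hf.sum_coeff_pow_eq_zero (s := 1) (M := 2) (by omega)
        (by grw [natDegree_le b c e, hK]; omega)
      simpa [hK, Finset.sum_range_succ, coeff_eq] using this
    exact ⟨rfl, fun h => one_ne_zero (hf.injective (by simp [hlinear, h]))⟩
  · rintro ⟨rfl, h⟩
    refine Finite.injective_iff_bijective.mp ?_
    simpa only [hlinear] using mul_right_injective₀ h

variable [CharP K 3]

theorem isPermPoly_depressedQuintic_zero_neg_sq [Finite K] (hneg : ¬IsSquare (-1 : K)) :
    IsPermPoly (depressedQuintic b 0 (-b ^ 2)) := by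
  refine Finite.injective_iff_bijective.mp fun x y hxy => sub_eq_zero.mp ?_
  by_contra hne
  simp only [eval_eq] at hxy
  have hfactor : (x - y) * ((x * y + b) ^ 2 + ((x + y) ^ 2 - b) ^ 2) = 0 := by grind
  have hsum := (mul_eq_zero.mp hfactor).resolve_left hne
  have hsum_sq : (x + y) ^ 2 = b :=
    sub_eq_zero.mp (eq_zero_of_sq_add_sq_eq_zero hneg hsum)
  have hprod : x * y = -b := by
    rw [add_comm] at hsum
    exact eq_neg_of_add_eq_zero_left (eq_zero_of_sq_add_sq_eq_zero hneg hsum)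
  exact hne (eq_zero_of_sq_add_sq_eq_zero hneg (x := x + y) (by grind))

variable [Fintype K]

theorem one_add_add_ne_zero_iff_of_card_eq_three (hK : Fintype.card K = 3) : 1 + b + e ≠ 0 ↔
    b = 1 ∧ e = 0 ∨ b = 2 ∧ e = 1 ∨ b = 0 ∧ e = 1 ∨ e = -b ^ 2 := by
  have hb : b ^ 3 = b := hK ▸ FiniteField.pow_card b
  have he : e ^ 3 = e := hK ▸ FiniteField.pow_card e
  grind

theorem isPermPoly_depressedQuintic_zero_zero_of_sq_eq_neg_one (hK : Fintype.card K = 9)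
    (he : e ^ 2 = -1) : IsPermPoly (depressedQuintic 0 0 e) := by
  refine Finite.injective_iff_bijective.mp fun x y hxy => ?_
  have hpow (z : K) : z ^ 9 = z := hK ▸ FiniteField.pow_card z
  have hfourth (z : K) : (depressedQuintic 0 0 e).eval z ^ 4 = -z ^ 4 := by
    have := hpow z
    rw [eval_eq]
    grind
  have hxy4 : x ^ 4 = y ^ 4 := neg_injective (by rw [← hfourth, ← hfourth, hxy])
  have hne : x ^ 4 + e ≠ 0 := by
    have := hpow x
    grind
  refine mul_right_cancel₀ hne ?_
  simp only [eval_eq] at hxy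
  linear_combination hxy - y * hxy4

theorem isPermPoly_depressedQuintic_iff_of_odd {k : ℕ} (hK : Fintype.card K = 3 ^ k)
    (hk : k % 2 = 1) (hk1 : k ≠ 1) :
    IsPermPoly (depressedQuintic b c e) ↔ c = 0 ∧ e = -b ^ 2 := by
  have hneg := not_isSquare_neg_one_of_card_eq_three_pow hK hk
  refine ⟨fun hf => ?_, ?_⟩
  · obtain ⟨i, rfl | rfl⟩ : ∃ i, k = 4 * i + 5 ∨ k = 4 * i + 3 :=
      ⟨(k - 3) / 4, by omega⟩
    all_goals
      have hmod := three_pow_four_mul_mod_five i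
      rw [pow_add] at hK
    · exact IsPermPoly.eq_zero_and_eq_neg_sq_of_card_eq_135_mul_add_108
        (m := 9 * (3 ^ (4 * i) / 5) + 1) (by omega) hf
    · have hK' : Fintype.card K = 135 * (3 ^ (4 * i) / 5) + 27 := by omega
      exact ⟨hf.eq_zero_of_card_eq_135_mul_add_27 hK',
        hf.eq_neg_sq_of_card_eq_135_mul_add_27 hK' hneg⟩
  · rintro ⟨rfl, rfl⟩
    exact isPermPoly_depressedQuintic_zero_neg_sq hneg

theorem isPermPoly_depressedQuintic_iff_of_mod_four_eq_two {k : ℕ} (hK : Fintype.card K = 3 ^ k)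
    (hgcd : Nat.gcd 5 (3 ^ k - 1) = 1) (hk : k % 4 = 2) :
    IsPermPoly (depressedQuintic b c e) ↔
      b = 0 ∧ c = 0 ∧ (e = 0 ∨ k = 2 ∧ e ^ 2 = -1) := by
  refine ⟨fun hf => ?_, ?_⟩
  · obtain ⟨i, rfl⟩ : ∃ i, k = 4 * i + 2 := ⟨k / 4, by omega⟩
    rcases Nat.eq_zero_or_pos i with rfl | hi
    · simpa using hf.eq_zero_and_sq_eq_neg_one_of_card_eq_nine (by simpa using hK)
    · have hmod := three_pow_four_mul_mod_five i
      have hle : 3 ^ (4 * 1) ≤ 3 ^ (4 * i) := by gcongr <;> omega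
      rw [pow_add] at hK
      obtain ⟨hb, hc, he⟩ := hf.eq_zero_of_card_eq_45_mul_add_9 (m := 3 ^ (4 * i) / 5) (by omega)
        (by omega)
      exact ⟨hb, hc, .inl he⟩
  · rintro ⟨rfl, rfl, rfl | ⟨rfl, he⟩⟩
    · exact isPermPoly_depressedQuintic_zero (by rwa [Nat.card_eq_fintype_card, hK])
    · exact isPermPoly_depressedQuintic_zero_zero_of_sq_eq_neg_one hK he

theorem isPermPoly_depressedQuintic_iff {k : ℕ} (hK : Fintype.card K = 3 ^ k)
    (hgcd : Nat.gcd 5 (3 ^ k - 1) = 1) :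
    IsPermPoly (depressedQuintic b c e) ↔
      (k = 2 ∧ b = 0 ∧ c = 0 ∧ e ^ 2 = -1) ∨ (k = 1 ∧ b = 1 ∧ c = 0 ∧ e = 0) ∨
      (k = 1 ∧ b = 2 ∧ c = 0 ∧ e = 1) ∨ (k = 1 ∧ b = 0 ∧ c = 0 ∧ e = 1) ∨
      (k % 4 = 2 ∧ b = 0 ∧ c = 0 ∧ e = 0) ∨ (k % 2 = 1 ∧ c = 0 ∧ -b ^ 2 = e) := by
  rcases eq_or_ne k 1 with rfl | hk1
  · rw [isPermPoly_depressedQuintic_iff_of_card_eq_three hK,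
      one_add_add_ne_zero_iff_of_card_eq_three hK]
    grind
  · have := mod_four_ne_zero_of_coprime hgcd
    obtain hk | hk : k % 4 = 2 ∨ k % 2 = 1 := by omega
    · rw [isPermPoly_depressedQuintic_iff_of_mod_four_eq_two hK hgcd hk]
      grind
    · rw [isPermPoly_depressedQuintic_iff_of_odd hK hk hk1]
      grind

end Classification

section NormReduction

variable {K F : Type*} [Field K] [Field F] [Finite F] [Algebra K F]

theorem bijective_mul_comp_norm_iff (ψ : K → F) :
    Function.Bijective (fun x : F => x * ψ (Algebra.norm K x)) ↔
      Function.Bijective (fun y : K => y * Algebra.norm K (ψ y)) := by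
  have : Finite K := Finite.of_injective _ (algebraMap K F).injective
  set g : F → F := fun x => x * ψ (Algebra.norm K x)
  set h : K → K := fun y => y * Algebra.norm K (ψ y)
  have hsemiconj : h ∘ Algebra.norm K = Algebra.norm K ∘ g := funext fun x => (map_mul _ _ _).symm
  refine ⟨fun hg => Finite.surjective_iff_bijective.mp ?_,
    fun hh => Finite.injective_iff_bijective.mp fun x x' hxx' => ?_⟩
  · refine Function.Surjective.of_comp (g := Algebra.norm K (S := F)) ?_
    rw [hsemiconj]
    exact (FiniteField.norm_surjective K F).comp hg.surjective
  · have hnorm : Algebra.norm K x = Algebra.norm K x' := hh.injective <|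
      calc h (Algebra.norm K x) = Algebra.norm K (g x) := congrFun hsemiconj x
        _ = Algebra.norm K (g x') := by rw [hxx']
        _ = h (Algebra.norm K x') := (congrFun hsemiconj x').symm
    have hprod : x * ψ (Algebra.norm K x) = x' * ψ (Algebra.norm K x) := by
      simpa only [g, ← hnorm] using hxx'
    rcases eq_or_ne (ψ (Algebra.norm K x)) 0 with hψ | hψ
    · have hx : Algebra.norm K x = 0 := hh.injective (by simp [h, hψ])
      have hx' : Algebra.norm K x' = 0 := hnorm ▸ hx
      exact (Algebra.norm_eq_zero_iff.mp hx).trans (Algebra.norm_eq_zero_iff.mp hx').symm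
    · exact mul_right_cancel₀ hψ hprod

theorem pow_card_sub_one_div_succ_eq_mul_norm (x : F) :
    x ^ ((Nat.card F - 1) / (Nat.card K - 1) + 1) = x * algebraMap K F (Algebra.norm K x) := by
  rw [FiniteField.algebraMap_norm_eq_pow, pow_succ']

theorem bijective_inv_mul_mul_norm {a : F} (ha : a ≠ 0)
    (hcop : Nat.Coprime (Module.finrank K F + 1) (Nat.card K - 1)) :
    Function.Bijective fun x : F => a⁻¹ * (x * algebraMap K F (Algebra.norm K x)) := by
  have : Finite K := Finite.of_injective _ (algebraMap K F).injective
  have hna : Algebra.norm K a⁻¹ ≠ 0 := Algebra.norm_ne_zero_iff.mpr (inv_ne_zero ha)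
  have hnorm : (fun y : K => y * Algebra.norm K (a⁻¹ * algebraMap K F y)) =
      (Algebra.norm K a⁻¹ * ·) ∘ (· ^ (Module.finrank K F + 1)) := by
    funext y
    rw [map_mul, Algebra.norm_algebraMap, Function.comp_apply, pow_succ', mul_left_comm]
  have hbij : Function.Bijective fun y : K => y * Algebra.norm K (a⁻¹ * algebraMap K F y) := by
    rw [hnorm]
    exact (mulLeft_bijective₀ _ hna).comp
      (Finite.injective_iff_bijective.mp
        (pow_injective_of_coprime_card_sub_one (Nat.succ_ne_zero _) hcop))
  simpa only [mul_left_comm] using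
    (bijective_mul_comp_norm_iff fun y => a⁻¹ * algebraMap K F y).mpr hbij

theorem bijective_inv_mul_mul_norm_add_self_iff {a : F} (ha : a ≠ 0) :
    Function.Bijective (fun x : F => a⁻¹ * (x * algebraMap K F (Algebra.norm K x)) + x) ↔
      Function.Bijective fun y : K => y * Algebra.norm K (a + algebraMap K F y) := by
  have hna : Algebra.norm K a⁻¹ ≠ 0 := Algebra.norm_ne_zero_iff.mpr (inv_ne_zero ha)
  have hleft : (fun x : F => a⁻¹ * (x * algebraMap K F (Algebra.norm K x)) + x) =
      fun x => x * (a⁻¹ * (a + algebraMap K F (Algebra.norm K x))) := by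
    funext x
    field_simp
    ring
  have hright : (fun y : K => y * Algebra.norm K (a⁻¹ * (a + algebraMap K F y))) =
      fun y => Algebra.norm K a⁻¹ * (y * Algebra.norm K (a + algebraMap K F y)) := by
    funext y
    rw [map_mul, mul_left_comm]
  rw [hleft, bijective_mul_comp_norm_iff fun y => a⁻¹ * (a + algebraMap K F y), hright]
  exact (mulLeft_bijective₀ _ hna).of_comp_iff' _

theorem bijective_inv_mul_pow_and_add_self_iff {a : F} (ha : a ≠ 0)
    (hcop : Nat.Coprime (Module.finrank K F + 1) (Nat.card K - 1)) {d : ℕ}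
    (hd : d = (Nat.card F - 1) / (Nat.card K - 1) + 1) :
    Function.Bijective (fun x : F => a⁻¹ * x ^ d) ∧
        Function.Bijective (fun x : F => a⁻¹ * x ^ d + x) ↔
      Function.Bijective fun y : K => y * Algebra.norm K (a + algebraMap K F y) := by
  simp only [hd, pow_card_sub_one_div_succ_eq_mul_norm (K := K)]
  rw [and_iff_right (bijective_inv_mul_mul_norm ha hcop),
    bijective_inv_mul_mul_norm_add_self_iff ha]

end NormReduction

theorem algebraMap_norm_add_algebraMap {K F : Type*} [Field K] [Fintype K] [Field F] [Finite F]
    [Algebra K F] (a : F) (y : K) : algebraMap K F (Algebra.norm K (a + algebraMap K F y)) =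
      ∏ i ∈ Finset.range (Module.finrank K F),
        (a ^ Fintype.card K ^ i + algebraMap K F y) := by
  rw [FiniteField.algebraMap_norm_eq_prod_pow, Nat.card_eq_fintype_card]
  refine Finset.prod_congr rfl fun i _ => ?_
  have hfrob (x : F) : (FiniteField.frobeniusAlgHom K F ^ i) x = x ^ Fintype.card K ^ i := by
    rw [AlgHom.coe_pow, FiniteField.coe_frobeniusAlgHom, pow_iterate]
  rw [← hfrob, map_add, AlgHom.commutes, hfrob]

theorem finrank_eq_of_natCard_eq_pow {K F : Type*} [Field K] [Field F] [Finite F] [Algebra K F]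
    {r : ℕ} (h : Nat.card F = Nat.card K ^ r) : Module.finrank K F = r := by
  have : Finite K := Finite.of_injective _ (algebraMap K F).injective
  rw [Module.natCard_eq_pow_finrank (K := K)] at h
  exact Nat.pow_right_injective Finite.one_lt_card h

theorem mem_range_algebraMap_of_pow_card_eq {K F : Type*} [Field K] [Fintype K] [Field F] [Finite F]
    [Algebra K F] {x : F} (hx : x ^ Fintype.card K = x) : x ∈ Set.range (algebraMap K F) := by
  rw [IsGalois.mem_range_algebraMap_iff_fixed]
  intro σ
  obtain ⟨i, rfl⟩ := (FiniteField.bijective_frobeniusAlgEquivOfAlgebraic_pow K F).surjective σ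
  simp only [AlgEquiv.coe_pow, FiniteField.coe_frobeniusAlgEquivOfAlgebraic]
  exact Function.iterate_fixed hx i

theorem exists_subfield_natCard_eq {F : Type*} [Field F] [Finite F] {p k n : ℕ} [Fact p.Prime]
    (hF : Nat.card F = p ^ n) (hk : k ≠ 0) (hkn : k ∣ n) :
    ∃ K : Subfield F, Nat.card K = p ^ k := by
  have := Fintype.ofFinite F
  have : CharP F p := charP_of_card_eq_prime_pow (by rwa [← Nat.card_eq_fintype_card])
  let _ : Algebra (ZMod p) F := ZMod.algebra F p
  have hrank : Module.finrank (ZMod p) F = n := by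
    apply Nat.pow_right_injective (Fact.out : p.Prime).two_le
    simp only
    rw [FiniteField.pow_finrank_eq_natCard, hF]
  obtain ⟨f⟩ := FiniteField.nonempty_algHom_of_finrank_dvd (F := ZMod p) (K := GaloisField p k)
    (L := F) (by rwa [hrank, GaloisField.finrank p hk])
  refine ⟨f.toRingHom.fieldRange, ?_⟩
  rw [← GaloisField.card p k hk]
  exact (Nat.card_congr (RingHom.rangeRestrictFieldEquiv f.toRingHom).toEquiv).symm

theorem bijective_quintic_iff_isPermPoly_depressedQuintic {K : Type*} [Field K] [CharP K 3]
    (m1 m2 m3 m4 : K) :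
    Function.Bijective (fun y => y * (y ^ 4 + m1 * y ^ 3 + m2 * y ^ 2 + m3 * y + m4)) ↔
      IsPermPoly (depressedQuintic (m2 - m1 ^ 2) (m3 + m1 ^ 3) (m4 - m1 * m3)) := by
  have htranslate : (fun y => y * (y ^ 4 + m1 * y ^ 3 + m2 * y ^ 2 + m3 * y + m4)) =
      Equiv.addRight (m1 * (m1 ^ 4 + m1 * m1 ^ 3 + m2 * m1 ^ 2 + m3 * m1 + m4)) ∘
      (fun x => (depressedQuintic (m2 - m1 ^ 2) (m3 + m1 ^ 3) (m4 - m1 * m3)).eval x) ∘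
        Equiv.subRight m1 := by
    funext y
    simp only [Function.comp_apply, Equiv.coe_addRight, Equiv.subRight_apply,
      depressedQuintic.eval_eq]
    grind
  rw [htranslate, EquivLike.comp_bijective, EquivLike.bijective_comp, IsPermPoly]

section CyclicOrbit

variable {K F : Type*} [Field K] [Fintype K] [Field F] [Algebra K F]
  {a0 a1 a2 a3 l1 l2 l3 l4 : F}
  (h0 : a0 ^ Fintype.card K = a1) (h1 : a1 ^ Fintype.card K = a2)
  (h2 : a2 ^ Fintype.card K = a3) (h3 : a3 ^ Fintype.card K = a0)
  (hl1 : l1 = a0 + a1 + a2 + a3)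
  (hl2 : l2 = a0 * a1 + a0 * a2 + a0 * a3 + a1 * a2 + a1 * a3 + a2 * a3)
  (hl3 : l3 = a0 * a1 * a2 + a0 * a1 * a3 + a0 * a2 * a3 + a1 * a2 * a3)
  (hl4 : l4 = a0 * a1 * a2 * a3)

include h0 h1 h2 h3 hl1 hl2 hl3 hl4

theorem esymm_pow_card : l1 ^ Fintype.card K = l1 ∧ l2 ^ Fintype.card K = l2 ∧
    l3 ^ Fintype.card K = l3 ∧ l4 ^ Fintype.card K = l4 := by
  simp only [← FiniteField.frobeniusAlgHom_apply K F] at h0 h1 h2 h3 ⊢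
  refine ⟨?_, ?_, ?_, ?_⟩ <;>
  · simp only [hl1, hl2, hl3, hl4, map_add, map_mul, h0, h1, h2, h3]
    ring

theorem exists_norm_add_algebraMap_eq_quartic [Finite F] (hrank : Module.finrank K F = 4) :
    ∃ m1 m2 m3 m4 : K, algebraMap K F m1 = l1 ∧ algebraMap K F m2 = l2 ∧
      algebraMap K F m3 = l3 ∧ algebraMap K F m4 = l4 ∧
      ∀ y, Algebra.norm K (a0 + algebraMap K F y) =
        y ^ 4 + m1 * y ^ 3 + m2 * y ^ 2 + m3 * y + m4 := by
  obtain ⟨hpow1, hpow2, hpow3, hpow4⟩ := esymm_pow_card h0 h1 h2 h3 hl1 hl2 hl3 hl4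
  obtain ⟨m1, hm1⟩ := mem_range_algebraMap_of_pow_card_eq hpow1
  obtain ⟨m2, hm2⟩ := mem_range_algebraMap_of_pow_card_eq hpow2
  obtain ⟨m3, hm3⟩ := mem_range_algebraMap_of_pow_card_eq hpow3
  obtain ⟨m4, hm4⟩ := mem_range_algebraMap_of_pow_card_eq hpow4
  refine ⟨m1, m2, m3, m4, hm1, hm2, hm3, hm4, fun y => (algebraMap K F).injective ?_⟩
  rw [algebraMap_norm_add_algebraMap, hrank]
  simp only [Finset.prod_range_succ, Finset.prod_range_zero, pow_zero, pow_succ, pow_mul, pow_one,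
    one_mul, h0, h1, h2, map_add, map_mul, hm1, hm2, hm3, hm4, hl1, hl2, hl3, hl4]
  ring

theorem esymm_four_sub_ne_one_of_card_eq_three [CharP F 3] (hK : Fintype.card K = 3)
    (ha0 : a0 ≠ 0) (hb : l2 - l1 ^ 2 = 0) (hc : l3 + l1 ^ 3 = 0) : l4 - l1 * l3 ≠ 1 := by
  intro he
  have three_eq_zero : (3 : F) = 0 := CharP.cast_eq_zero F 3
  have hfix := (esymm_pow_card h0 h1 h2 h3 hl1 hl2 hl3 hl4).1
  rw [hK] at h0 h1 h2 h3 hfix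
  have hl4_ne : l4 ≠ 0 := by
    subst h0 h1 h2
    simp [hl4, ha0]
  have hl1_zero : l1 = 0 := by
    by_contra hne
    have hsq : l1 ^ 2 = 1 := mul_right_cancel₀ hne (by linear_combination hfix)
    exact hl4_ne (by linear_combination he + l1 * hc - (l1 ^ 2 + 1) * hsq)
  have hroot : a0 ^ 4 - l1 * a0 ^ 3 + l2 * a0 ^ 2 - l3 * a0 + l4 = 0 := by
    rw [hl1, hl2, hl3, hl4]
    ring
  have hpow_four : a0 ^ 4 = -1 := by
    rw [hl1_zero] at hb hc he hroot
    linear_combination hroot - a0 ^ 2 * hb + a0 * hc - he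
  have ha2 : a2 = a0 := by
    rw [← h1, ← h0]
    linear_combination (a0 ^ 5 - a0) * hpow_four
  have ha3 : a3 = a1 := by rw [← h2, ha2, h0]
  have hmul : a0 * (a0 ^ 2 + 1) = 0 := by
    rw [hl1_zero, ha2, ha3] at hl1
    linear_combination h0 + hl1 + (a0 + a1) * three_eq_zero
  have hsq : a0 ^ 2 = -1 := eq_neg_of_add_eq_zero_left ((mul_eq_zero.mp hmul).resolve_left ha0)
  grind

end CyclicOrbit

theorem depressedQuintic_conditions_iff {R : Type*} [CommRing R] {l1 l2 l3 l4 : R} {k : ℕ}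
    (hex : ¬(k = 1 ∧ l2 - l1 ^ 2 = 0 ∧ l3 + l1 ^ 3 = 0 ∧ l4 - l1 * l3 = 1)) :
    ((k = 2 ∧ l2 - l1 ^ 2 = 0 ∧ l3 + l1 ^ 3 = 0 ∧ (l4 - l1 * l3) ^ 2 = -1) ∨
     (k = 1 ∧ l2 - l1 ^ 2 = 1 ∧ l3 + l1 ^ 3 = 0 ∧ l4 - l1 * l3 = 0) ∨
     (k = 1 ∧ l2 - l1 ^ 2 = 2 ∧ l3 + l1 ^ 3 = 0 ∧ l4 - l1 * l3 = 1) ∨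
     (k = 1 ∧ l2 - l1 ^ 2 = 0 ∧ l3 + l1 ^ 3 = 0 ∧ l4 - l1 * l3 = 1) ∨
     (k % 4 = 2 ∧ l2 - l1 ^ 2 = 0 ∧ l3 + l1 ^ 3 = 0 ∧ l4 - l1 * l3 = 0) ∨
     (k % 2 = 1 ∧ l3 + l1 ^ 3 = 0 ∧ -(l2 - l1 ^ 2) ^ 2 = l4 - l1 * l3)) ↔
    ((k = 2 ∧ l2 = l1 ^ 2 ∧ l3 = -l1 ^ 3 ∧ (l4 + l1 ^ 4) ^ 2 = -1) ∨
     (k = 1 ∧ l2 = l1 ^ 2 + 1 ∧ l3 = -l1 ^ 3 ∧ l4 = -l1 ^ 4) ∨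
     (k = 1 ∧ l2 = l1 ^ 2 + 2 ∧ l3 = -l1 ^ 3 ∧ l4 = -l1 ^ 4 + 1) ∨
     (k % 4 = 2 ∧ l2 = l1 ^ 2 ∧ l3 = -l1 ^ 3 ∧ l4 = -l1 ^ 4) ∨
     (k % 2 = 1 ∧ l3 = -l1 ^ 3 ∧ -(l2 - l1 ^ 2) ^ 2 = l4 - l1 * l3)) := by
  simp only [hex, false_or]
  by_cases hl3 : l3 = -l1 ^ 3
  · obtain rfl := hl3
    have he : l4 - l1 * -l1 ^ 3 = l4 + l1 ^ 4 := by ring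
    have he_one : l4 + l1 ^ 4 = 1 ↔ l4 = -l1 ^ 4 + 1 := by rw [add_comm, ← eq_neg_add_iff_add_eq]
    simp only [he, he_one, add_eq_zero_iff_eq_neg, sub_eq_iff_eq_add', add_zero, true_and]
  · simp only [add_eq_zero_iff_eq_neg, hl3, false_and, and_false]

/-- **Corollary (p = 3, r = 4).** Let `k ≥ 1` with `gcd(5, 3^k - 1) = 1`, `n = 4k`,
`d = (3^{4k} - 1)/(3^k - 1) + 1`, and let `F` be the finite field with `3^n` elements.
For `a ∈ F`, `a ≠ 0`, let `λ₁, λ₂, λ₃, λ₄` be the elementary symmetric functions of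
`a, a^{3^k}, a^{3^{2k}}, a^{3^{3k}}`. Then `a⁻¹ x^d` is a complete permutation
polynomial over `F` iff one of conditions (i)–(v) holds. -/
theorem stmt_5 (k : ℕ) (hk : 0 < k) (hgcd : Nat.gcd 5 (3 ^ k - 1) = 1)
    (n : ℕ) (hn : n = 4 * k) (d : ℕ) (hd : d = (3 ^ (4 * k) - 1) / (3 ^ k - 1) + 1)
    (F : Type*) [Field F] [Fintype F] (hF : Fintype.card F = 3 ^ n)
    (a : F) (ha : a ≠ 0)
    (a0 a1 a2 a3 : F) (ha0 : a0 = a) (ha1 : a1 = a ^ (3 ^ k))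
    (ha2 : a2 = a ^ (3 ^ (2 * k))) (ha3 : a3 = a ^ (3 ^ (3 * k)))
    (l1 l2 l3 l4 : F)
    (hl1 : l1 = a0 + a1 + a2 + a3)
    (hl2 : l2 = a0 * a1 + a0 * a2 + a0 * a3 + a1 * a2 + a1 * a3 + a2 * a3)
    (hl3 : l3 = a0 * a1 * a2 + a0 * a1 * a3 + a0 * a2 * a3 + a1 * a2 * a3)
    (hl4 : l4 = a0 * a1 * a2 * a3) :
    (Function.Bijective (fun x : F => a⁻¹ * x ^ d) ∧
     Function.Bijective (fun x : F => a⁻¹ * x ^ d + x)) ↔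
    ((k = 2 ∧ l2 = l1 ^ 2 ∧ l3 = -l1 ^ 3 ∧ (l4 + l1 ^ 4) ^ 2 = -1) ∨
     (k = 1 ∧ l2 = l1 ^ 2 + 1 ∧ l3 = -l1 ^ 3 ∧ l4 = -l1 ^ 4) ∨
     (k = 1 ∧ l2 = l1 ^ 2 + 2 ∧ l3 = -l1 ^ 3 ∧ l4 = -l1 ^ 4 + 1) ∨
     (k % 4 = 2 ∧ l2 = l1 ^ 2 ∧ l3 = -l1 ^ 3 ∧ l4 = -l1 ^ 4) ∨
     (k % 2 = 1 ∧ l3 = -l1 ^ 3 ∧ -(l2 - l1 ^ 2) ^ 2 = l4 - l1 * l3)) := by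
  have : Fact (Nat.Prime 3) := ⟨Nat.prime_three⟩
  subst hn ha0
  have : CharP F 3 := charP_of_card_eq_prime_pow hF
  rw [← Nat.card_eq_fintype_card] at hF
  obtain ⟨K, hK⟩ := exists_subfield_natCard_eq hF hk.ne' (dvd_mul_left k 4)
  have := Fintype.ofFinite K
  have hrank : Module.finrank K F = 4 :=
    finrank_eq_of_natCard_eq_pow (by rw [hF, hK, ← pow_mul, mul_comm])
  rw [← hF, ← hK] at hd
  rw [bijective_inv_mul_pow_and_add_self_iff ha (by rwa [hrank, hK]) hd]
  rw [Nat.card_eq_fintype_card] at hF hK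
  have h0 : a0 ^ Fintype.card K = a1 := by rw [hK, ha1]
  have h1 : a1 ^ Fintype.card K = a2 := by rw [hK, ha1, ha2, ← pow_mul, ← pow_add, two_mul]
  have h2 : a2 ^ Fintype.card K = a3 := by rw [hK, ha2, ha3, ← pow_mul, ← pow_add, ← Nat.succ_mul]
  have h3 : a3 ^ Fintype.card K = a0 := by
    rw [hK, ha3, ← pow_mul, ← pow_add, ← Nat.succ_mul, ← hF, FiniteField.pow_card]
  obtain ⟨m1, m2, m3, m4, hm1, hm2, hm3, hm4, hnorm⟩ :=
    exists_norm_add_algebraMap_eq_quartic h0 h1 h2 h3 hl1 hl2 hl3 hl4 hrank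
  simp only [hnorm]
  rw [bijective_quintic_iff_isPermPoly_depressedQuintic, isPermPoly_depressedQuintic_iff hK hgcd]
  simp only [← (algebraMap K F).injective.eq_iff, map_sub, map_add, map_mul, map_neg, map_pow,
    map_zero, map_one, map_ofNat, hm1, hm2, hm3, hm4]
  refine depressedQuintic_conditions_iff fun ⟨hk1, hb, hc, he⟩ =>
    esymm_four_sub_ne_one_of_card_eq_three h0 h1 h2 h3 hl1 hl2 hl3 hl4 ?_ ha hb hc he
  rw [hK, hk1, pow_one]
end
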